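/- There is a universal constant $K>0$ such that the following holds. Let $A$ be a finite set with $a:=|A|$, let $H$ be a complex Hilbert space of finite dimension $d$, let $V$ assign to every $x\in A$ a quantum state $V(x)$ on $H$ (a positive semidefinite operator of trace $1$), let $P$ be a probability distribution on $A$, let $n\ge 1$ be an integer and let $\alpha>0$. Put $PV:=\sum_{x\in A}P(x)V(x)$, let $S(\rho):=-\mathrm{tr}(\rho\log_2\rho)$ be the von Neumann entropy, and let $V^{\otimes n}(x^n):=V(x_1)\otimes\cdots\otimes V(x_n)$ for $x^n=(x_1,\dots,x_n)\in A^n$. Then there exists an orthogonal projection $\Pi$ on $H^{\otimes n}$ that commutes with $(PV)^{\otimes n}$ and satisfies (i) $\mathrm{tr}\big((PV)^{\otimes n}\,\Pi\big)\ \ge\ 1-\dfrac{d}{4a\alpha^2}$; (ii) $\mathrm{tr}(\Pi)\ \le\ 2^{\,nS(PV)+Kd\alpha\sqrt{an}}$; (iii) $\Pi\,(PV)^{\otimes n}\,\Pi\ \le\ 2^{-nS(PV)+Kd\alpha\sqrt{an}}\;\Pi$, where $X\le Y$ means that $Y-X$ is positive semidefinite; (iv) for every sequence $x^n\in A^n$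 of type $P$ (every $x\in A$ occurs exactly $nP(x)$ times in $x^n$), $\mathrm{tr}\big(V^{\otimes n}(x^n)\,\Pi\big)\ \ge\ 1-\dfrac{ad}{4\alpha^2}$. -/

import Mathlib

open scoped ComplexOrder

noncomputable section

/-- The Loewner order on operators: `X ≤ Y` iff `Y - X` is positive semidefinite. -/
def loewnerLE {ι : Type*} [Fintype ι] (X Y : Matrix ι ι ℂ) : Prop := (Y - X).PosSemidef

/-- A quantum state: a positive semidefinite operator with unit trace. A Hilbert space of
dimension `d` is represented by an orthonormal basis indexed by a type `ι` with `d` elements. -/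
def IsState {ι : Type*} [Fintype ι] (ρ : Matrix ι ι ℂ) : Prop := ρ.PosSemidef ∧ ρ.trace = 1

/-- The von Neumann entropy `S(ρ) = -tr(ρ log₂ ρ) = -∑ λᵢ log₂ λᵢ` over the eigenvalues `λᵢ`
of `ρ` with multiplicity, where `0 log₂ 0 = 0`. -/
def vnEntropy {ι : Type*} [Fintype ι] [DecidableEq ι] (ρ : Matrix ι ι ℂ) : ℝ :=
  if h : ρ.IsHermitian then -∑ i, h.eigenvalues i * Real.logb 2 (h.eigenvalues i) else 0

/-- A probability distribution on a finite set. -/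
def IsDist {A : Type*} [Fintype A] (P : A → ℝ) : Prop := (∀ a, 0 ≤ P a) ∧ ∑ a, P a = 1

/-- The averaged output `PV = ∑ₐ P(a) V(a)`. -/
def avgOutput {A ι : Type*} [Fintype A] (P : A → ℝ) (V : A → Matrix ι ι ℂ) : Matrix ι ι ℂ :=
  ∑ a, (P a : ℂ) • V a

/-- The tensor product `M 0 ⊗ ⋯ ⊗ M (n - 1)`, on the product basis indexed by `Fin n → ι`. -/
def tensorProd {n : ℕ} {ι : Type*} (M : Fin n → Matrix ι ι ℂ) :
    Matrix (Fin n → ι) (Fin n → ι) ℂ :=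
  Matrix.of fun i j => ∏ k, M k (i k) (j k)

/-- The tensor power `ρ^{⊗n}`. -/
def tensorPow {ι : Type*} (ρ : Matrix ι ι ℂ) (n : ℕ) : Matrix (Fin n → ι) (Fin n → ι) ℂ :=
  tensorProd fun _ => ρ

/-- The `n`-fold extension `V^{⊗n}(xⁿ) = V(x₁) ⊗ ⋯ ⊗ V(xₙ)` of a cq channel. -/
def cqPow {A ι : Type*} (V : A → Matrix ι ι ℂ) {n : ℕ} (x : Fin n → A) :
    Matrix (Fin n → ι) (Fin n → ι) ℂ :=
  tensorProd fun k => V (x k)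

/-- The sequence `x` has type `P`: every `a` occurs exactly `n P(a)` times in it. -/
def HasType {A : Type*} [DecidableEq A] {n : ℕ} (P : A → ℝ) (x : Fin n → A) : Prop :=
  ∀ a, ((Finset.univ.filter fun k => x k = a).card : ℝ) = n * P a

end

open scoped ComplexOrder Matrix

noncomputable section

namespace TypicalProjector

/-! ### Chebyshev's inequality for product distributions -/

section Chebyshev

variable {ι : Type*} [Fintype ι] {n : ℕ}

lemma sum_prod_mul_mul (w g : Fin n → ι → ℝ) (hw : ∀ k, ∑ i, w k i = 1)
    (hg : ∀ k, ∑ i, w k i * g k i = 0) (k l : Fin n) :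
    ∑ J : Fin n → ι, (∏ m, w m (J m)) * (g k (J k) * g l (J l)) =
      if k = l then ∑ i, w k i * g k i ^ 2 else 0 := by
  classical
  have key : ∀ J : Fin n → ι, (∏ m, w m (J m)) * (g k (J k) * g l (J l)) =
      ∏ m, w m (J m) * ((if m = k then g m (J m) else 1) * (if m = l then g m (J m) else 1)) := by
    intro J
    rw [Finset.prod_mul_distrib, Finset.prod_mul_distrib]
    simp
  simp_rw [key]
  rw [← Fintype.prod_sum fun m i =>
    w m i * ((if m = k then g m i else 1) * (if m = l then g m i else 1))]
  split_ifs with hkl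
  · subst hkl
    rw [Finset.prod_eq_single k]
    · simp [pow_two]
    · intro m _ hm
      simp [hm, hw]
    · simp
  · refine Finset.prod_eq_zero (Finset.mem_univ k) ?_
    simp [hkl, hg]

/-- The variance of a sum of independent centred random variables. -/
lemma sum_prod_mul_sq (w g : Fin n → ι → ℝ) (hw : ∀ k, ∑ i, w k i = 1)
    (hg : ∀ k, ∑ i, w k i * g k i = 0) :
    ∑ J : Fin n → ι, (∏ m, w m (J m)) * (∑ k, g k (J k)) ^ 2 =
      ∑ k, ∑ i, w k i * g k i ^ 2 := by
  simp_rw [pow_two (∑ k, _), Finset.sum_mul_sum, Finset.mul_sum]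
  rw [Finset.sum_comm]
  refine Finset.sum_congr rfl fun k _ => ?_
  rw [Finset.sum_comm]
  simp [sum_prod_mul_mul w g hw hg]

lemma sum_prod_eq_one (w : Fin n → ι → ℝ) (hw : ∀ k, ∑ i, w k i = 1) :
    ∑ J : Fin n → ι, ∏ m, w m (J m) = 1 := by
  classical
  rw [← Fintype.prod_sum]
  simp [hw]

/-- Chebyshev's inequality for `∑ k, f (J k)`, where the `J k` are independent with
distributions `w k` whose average is `p`. -/
lemma chebyshev (w : Fin n → ι → ℝ) (p f : ι → ℝ) (hw0 : ∀ k i, 0 ≤ w k i)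
    (hw : ∀ k, ∑ i, w k i = 1) (hp : ∀ i, ∑ k, w k i = n * p i) {t : ℝ} (ht : 0 < t) :
    1 - n * (∑ i, p i * f i ^ 2) / t ^ 2 ≤
      ∑ J : Fin n → ι with |∑ k, f (J k) - n * ∑ i, p i * f i| ≤ t, ∏ k, w k (J k) := by
  set μ : Fin n → ℝ := fun k => ∑ i, w k i * f i with hμ
  have swap : ∀ h : ι → ℝ, ∑ k, ∑ i, w k i * h i = n * ∑ i, p i * h i := fun h => by
    rw [Finset.sum_comm, Finset.mul_sum]
    refine Finset.sum_congr rfl fun i _ => ?_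
    rw [← Finset.sum_mul, hp, mul_assoc]
  have hmean : ∀ J : Fin n → ι,
      ∑ k, f (J k) - n * ∑ i, p i * f i = ∑ k, (f (J k) - μ k) := fun J => by
    rw [Finset.sum_sub_distrib, hμ, swap]
  have hvar := sum_prod_mul_sq w (fun k i => f i - μ k) hw fun k => by
    simp [mul_sub, ← Finset.sum_mul, hw, hμ]
  have hle : ∑ k, ∑ i, w k i * (f i - μ k) ^ 2 ≤ n * ∑ i, p i * f i ^ 2 := by
    rw [← swap]
    refine Finset.sum_le_sum fun k _ => ?_
    have : ∑ i, w k i * (f i - μ k) ^ 2 = ∑ i, w k i * f i ^ 2 - μ k ^ 2 := by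
      have : ∀ i, w k i * (f i - μ k) ^ 2 =
          w k i * f i ^ 2 - 2 * μ k * (w k i * f i) + w k i * μ k ^ 2 := fun i => by ring
      simp_rw [this, Finset.sum_add_distrib, Finset.sum_sub_distrib, ← Finset.mul_sum,
        ← Finset.sum_mul, hw]
      simp only [hμ]
      ring
    rw [this]
    linarith [sq_nonneg (μ k)]
  have hsplit := Finset.sum_filter_add_sum_filter_not (Finset.univ : Finset (Fin n → ι))
    (fun J => |∑ k, f (J k) - n * ∑ i, p i * f i| ≤ t) (fun J => ∏ k, w k (J k))
  rw [sum_prod_eq_one w hw] at hsplit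
  have hw0' : ∀ J : Fin n → ι, 0 ≤ ∏ k, w k (J k) :=
    fun J => Finset.prod_nonneg fun k _ => hw0 k _
  have htail : (∑ J : Fin n → ι with ¬ |∑ k, f (J k) - n * ∑ i, p i * f i| ≤ t,
      ∏ k, w k (J k)) * t ^ 2 ≤ n * ∑ i, p i * f i ^ 2 := by
    refine le_trans ?_ (hvar.trans_le hle)
    rw [Finset.sum_mul, Finset.sum_filter]
    refine Finset.sum_le_sum fun J _ => ?_
    split_ifs with h
    · exact mul_nonneg (hw0' J) (sq_nonneg _)
    · refine mul_le_mul_of_nonneg_left ?_ (hw0' J)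
      rw [← hmean, sq_le_sq, abs_of_pos ht]
      exact (not_le.mp h).le
  have := (le_div_iff₀ (pow_pos ht 2)).mpr htail
  linarith

end Chebyshev

/-! ### Entropy-typical sequences -/

section TypicalSet

variable {ι : Type*} [Fintype ι] {n : ℕ}

open Classical in
/-- The sequences `J` in the support of `p^n` whose log-likelihood differs from its expectation
by at most `t`. -/
def typicalSet (p : ι → ℝ) (n : ℕ) (t : ℝ) : Finset (Fin n → ι) :=
  Finset.univ.filter fun J => (∀ k, 0 < p (J k)) ∧
    |∑ k, Real.logb 2 (p (J k)) - n * ∑ i, p i * Real.logb 2 (p i)| ≤ t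

lemma mul_sq_logb_le {x : ℝ} (h0 : 0 ≤ x) (h1 : x ≤ 1) : x * Real.logb 2 x ^ 2 ≤ 9 := by
  rcases h0.eq_or_lt with rfl | hx
  · simp
  have h := Real.abs_log_mul_self_rpow_lt x (1 / 2) hx h1 (by norm_num)
  rw [← Real.sqrt_eq_rpow] at h
  have h4 : Real.log x ^ 2 * x ≤ 4 := by
    have := pow_le_pow_left₀ (abs_nonneg _) h.le 2
    rw [sq_abs, mul_pow, Real.sq_sqrt h0] at this
    linarith
  have hl : (4 / 9 : ℝ) ≤ Real.log 2 ^ 2 := by nlinarith [Real.log_two_gt_d9]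
  rw [Real.logb, div_pow, mul_div_assoc', div_le_iff₀ (by positivity)]
  linarith

lemma le_sum_typicalSet (w : Fin n → ι → ℝ) (p : ι → ℝ) (hw0 : ∀ k i, 0 ≤ w k i)
    (hw : ∀ k, ∑ i, w k i = 1) (hp : ∀ i, ∑ k, w k i = n * p i) (hp0 : ∀ i, 0 ≤ p i)
    (hp1 : ∀ i, p i ≤ 1) {t : ℝ} (ht : 0 < t) :
    1 - 9 * n * Fintype.card ι / t ^ 2 ≤ ∑ J ∈ typicalSet p n t, ∏ k, w k (J k) := by
  have h := chebyshev w p (fun i => Real.logb 2 (p i)) hw0 hw hp ht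
  have hvar : ∑ i, p i * Real.logb 2 (p i) ^ 2 ≤ Fintype.card ι * 9 := by
    simpa using Finset.sum_le_sum fun i (_ : i ∈ Finset.univ) =>
      mul_sq_logb_le (hp0 i) (hp1 i)
  have hdiv : n * (∑ i, p i * Real.logb 2 (p i) ^ 2) / t ^ 2 ≤
      9 * n * Fintype.card ι / t ^ 2 := by
    refine div_le_div_of_nonneg_right ?_ (sq_nonneg t)
    nlinarith [mul_le_mul_of_nonneg_left hvar (Nat.cast_nonneg (α := ℝ) n)]
  refine (sub_le_sub_left hdiv 1).trans (h.trans_eq ?_)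
  symm
  refine Finset.sum_subset (fun J hJ => ?_) fun J hJ hJ' => ?_
  · simp only [typicalSet, Finset.mem_filter, Finset.mem_univ, true_and] at hJ ⊢
    exact hJ.2
  · simp only [typicalSet, Finset.mem_filter, Finset.mem_univ, true_and] at hJ hJ'
    have : ∃ k, p (J k) ≤ 0 := by
      by_contra! hcon
      exact hJ' ⟨hcon, hJ⟩
    obtain ⟨k, hk⟩ := this
    have hsum := hp (J k)
    rw [le_antisymm hk (hp0 _), mul_zero,
      Finset.sum_eq_zero_iff_of_nonneg fun k _ => hw0 k _] at hsum
    exact Finset.prod_eq_zero (Finset.mem_univ k) (hsum k (Finset.mem_univ k))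

lemma prod_eq_two_rpow {p : ι → ℝ} {t : ℝ} {J : Fin n → ι} (hJ : J ∈ typicalSet p n t) :
    ∏ k, p (J k) = (2 : ℝ) ^ ∑ k, Real.logb 2 (p (J k)) := by
  simp only [typicalSet, Finset.mem_filter, Finset.mem_univ, true_and] at hJ
  rw [Real.rpow_sum_of_pos two_pos]
  exact Finset.prod_congr rfl fun k _ =>
    (Real.rpow_logb two_pos (by norm_num) (hJ.1 k)).symm

lemma prod_le_of_mem_typicalSet {p : ι → ℝ} {t : ℝ} {J : Fin n → ι}
    (hJ : J ∈ typicalSet p n t) :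
    ∏ k, p (J k) ≤ (2 : ℝ) ^ (n * (∑ i, p i * Real.logb 2 (p i)) + t) := by
  rw [prod_eq_two_rpow hJ]
  simp only [typicalSet, Finset.mem_filter, Finset.mem_univ, true_and] at hJ
  exact Real.rpow_le_rpow_of_exponent_le one_le_two (by linarith [(abs_le.mp hJ.2).2])

lemma card_typicalSet_le {p : ι → ℝ} (hp0 : ∀ i, 0 ≤ p i) (hp1 : ∑ i, p i = 1) (t : ℝ) :
    ((typicalSet p n t).card : ℝ) ≤
      (2 : ℝ) ^ (-(n * ∑ i, p i * Real.logb 2 (p i)) + t) := by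
  have hlow : ∀ J ∈ typicalSet p n t,
      (2 : ℝ) ^ (n * (∑ i, p i * Real.logb 2 (p i)) - t) ≤ ∏ k, p (J k) := fun J hJ => by
    rw [prod_eq_two_rpow hJ]
    simp only [typicalSet, Finset.mem_filter, Finset.mem_univ, true_and] at hJ
    exact Real.rpow_le_rpow_of_exponent_le one_le_two (by linarith [(abs_le.mp hJ.2).1])
  have h := (Finset.card_nsmul_le_sum _ _ _ hlow).trans
    ((Finset.sum_le_univ_sum_of_nonneg fun J => Finset.prod_nonneg fun k _ => hp0 (J k)).trans_eq
      (sum_prod_eq_one (fun _ => p) fun _ => hp1))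
  rw [nsmul_eq_mul, ← le_div_iff₀ (by positivity), one_div, ← Real.rpow_neg zero_le_two] at h
  rwa [neg_sub, sub_eq_neg_add] at h

end TypicalSet

/-! ### Tensor products of matrices -/

section Tensor

variable {ι : Type*} {n : ℕ}

lemma tensorProd_mul [Fintype ι] (M N : Fin n → Matrix ι ι ℂ) :
    tensorProd M * tensorProd N = tensorProd fun k => M k * N k := by
  classical
  ext i j
  simp only [tensorProd, Matrix.mul_apply, Matrix.of_apply, ← Finset.prod_mul_distrib]
  exact (Fintype.prod_sum fun k l => M k (i k) l * N k l (j k)).symm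

lemma tensorProd_diagonal [DecidableEq ι] (D : Fin n → ι → ℂ) :
    tensorProd (fun k => Matrix.diagonal (D k)) =
      Matrix.diagonal fun J : Fin n → ι => ∏ k, D k (J k) := by
  ext i j
  simp only [tensorProd, Matrix.of_apply]
  by_cases h : i = j
  · subst h
    simp
  · obtain ⟨k, hk⟩ := Function.ne_iff.mp h
    rw [Matrix.diagonal_apply_ne _ h]
    exact Finset.prod_eq_zero (Finset.mem_univ k) (Matrix.diagonal_apply_ne _ hk)

lemma tensorProd_one [DecidableEq ι] :
    tensorProd (fun _ : Fin n => (1 : Matrix ι ι ℂ)) = 1 := by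
  simpa using tensorProd_diagonal fun (_ : Fin n) (_ : ι) => (1 : ℂ)

lemma conjTranspose_tensorProd (M : Fin n → Matrix ι ι ℂ) :
    (tensorProd M)ᴴ = tensorProd fun k => (M k)ᴴ := by
  ext i j
  simp [tensorProd, Matrix.conjTranspose_apply]

end Tensor

/-! ### Projections that are diagonal in a given orthonormal basis -/

section DiagProjection

variable {κ : Type*} [Fintype κ] [DecidableEq κ]

/-- The projection onto the span of the columns of the unitary matrix `W` indexed by `T`. -/
def diagProjection (W : Matrix κ κ ℂ) (T : Finset κ) : Matrix κ κ ℂ :=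
  W * Matrix.diagonal (fun J => if J ∈ T then 1 else 0) * Wᴴ

lemma conj_diagonal_mul {W : Matrix κ κ ℂ} (hW : Wᴴ * W = 1) (D D' : κ → ℂ) :
    W * Matrix.diagonal D * Wᴴ * (W * Matrix.diagonal D' * Wᴴ) =
      W * Matrix.diagonal (fun J => D J * D' J) * Wᴴ := by
  rw [← Matrix.diagonal_mul_diagonal]
  calc _ = W * Matrix.diagonal D * (Wᴴ * W) * Matrix.diagonal D' * Wᴴ := by
        simp only [Matrix.mul_assoc]
    _ = _ := by simp only [hW, Matrix.mul_one, Matrix.mul_assoc]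

lemma isStarProjection_diagProjection {W : Matrix κ κ ℂ} (hW : Wᴴ * W = 1) (T : Finset κ) :
    IsStarProjection (diagProjection W T) where
  isIdempotentElem := by
    rw [IsIdempotentElem, diagProjection, conj_diagonal_mul hW]
    simp only [mul_ite, mul_one, mul_zero, ← ite_and, and_self]
  isSelfAdjoint := by
    rw [IsSelfAdjoint, Matrix.star_eq_conjTranspose, diagProjection]
    simp only [Matrix.conjTranspose_mul, Matrix.conjTranspose_conjTranspose,
      Matrix.diagonal_conjTranspose, Matrix.mul_assoc]
    congr 3
    ext J
    by_cases h : J ∈ T <;> simp [h]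

lemma commute_diagProjection {W : Matrix κ κ ℂ} (hW : Wᴴ * W = 1) (T : Finset κ) (D : κ → ℂ) :
    Commute (diagProjection W T) (W * Matrix.diagonal D * Wᴴ) := by
  rw [Commute, SemiconjBy, diagProjection, conj_diagonal_mul hW, conj_diagonal_mul hW]
  simp_rw [mul_comm]

lemma trace_mul_diagProjection (W M : Matrix κ κ ℂ) (T : Finset κ) :
    (M * diagProjection W T).trace = ∑ J ∈ T, (Wᴴ * M * W) J J := by
  rw [diagProjection, ← Matrix.mul_assoc, Matrix.trace_mul_comm, ← Matrix.mul_assoc,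
    ← Matrix.mul_assoc, Matrix.trace]
  simp [Matrix.mul_diagonal, Finset.sum_ite_mem]

lemma trace_diagProjection {W : Matrix κ κ ℂ} (hW : Wᴴ * W = 1) (T : Finset κ) :
    (diagProjection W T).trace = T.card := by
  have := trace_mul_diagProjection W 1 T
  rw [Matrix.one_mul, Matrix.mul_one, hW] at this
  simp [this]

lemma loewnerLE_diagProjection {W : Matrix κ κ ℂ} (hW : Wᴴ * W = 1) (T : Finset κ)
    (D : κ → ℝ) (c : ℝ) (hc : ∀ J ∈ T, D J ≤ c) :
    loewnerLE (diagProjection W T * (W * Matrix.diagonal (fun J => (D J : ℂ)) * Wᴴ) *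
      diagProjection W T) ((c : ℂ) • diagProjection W T) := by
  rw [loewnerLE, diagProjection, conj_diagonal_mul hW, conj_diagonal_mul hW]
  rw [← Matrix.smul_mul, ← Matrix.mul_smul, ← Matrix.sub_mul, ← Matrix.mul_sub,
    ← Matrix.diagonal_smul, Matrix.diagonal_sub]
  refine Matrix.PosSemidef.mul_mul_conjTranspose_same ?_ W
  rw [Matrix.posSemidef_diagonal_iff]
  intro J
  by_cases h : J ∈ T
  · simpa [h] using hc J h
  · simp [h]

end DiagProjection

/-! ### States -/

section States

variable {A ι : Type*} [Fintype A] [Fintype ι]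

lemma isState_avgOutput {P : A → ℝ} (hP : IsDist P) {V : A → Matrix ι ι ℂ}
    (hV : ∀ a, IsState (V a)) : IsState (avgOutput P V) := by
  constructor
  · exact Matrix.posSemidef_sum _ fun a _ => (hV a).1.smul (by simpa using hP.1 a)
  · simp only [avgOutput, Matrix.trace_sum, Matrix.trace_smul, (hV _).2, smul_eq_mul, mul_one]
    exact_mod_cast hP.2

/-- The distribution obtained by measuring the state `ρ` in the basis of the columns of `U`. -/
def diagDist (U ρ : Matrix ι ι ℂ) (i : ι) : ℝ := ((Uᴴ * ρ * U) i i).re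

lemma diagDist_nonneg (U : Matrix ι ι ℂ) {ρ : Matrix ι ι ℂ} (hρ : IsState ρ) (i : ι) :
    0 ≤ diagDist U ρ i :=
  (Complex.le_def.mp (hρ.1.conjTranspose_mul_mul_same U).diag_nonneg).1

lemma ofReal_diagDist (U : Matrix ι ι ℂ) {ρ : Matrix ι ι ℂ} (hρ : IsState ρ) (i : ι) :
    (diagDist U ρ i : ℂ) = (Uᴴ * ρ * U) i i :=
  (Complex.eq_re_of_ofReal_le (hρ.1.conjTranspose_mul_mul_same U).diag_nonneg).symm

lemma sum_diagDist [DecidableEq ι] {U : Matrix ι ι ℂ} (hU : U * Uᴴ = 1) {ρ : Matrix ι ι ℂ}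
    (hρ : IsState ρ) : ∑ i, diagDist U ρ i = 1 := by
  have : (Uᴴ * ρ * U).trace = 1 := by
    rw [Matrix.trace_mul_comm, ← Matrix.mul_assoc, hU, Matrix.one_mul, hρ.2]
  simpa [diagDist, Matrix.trace] using congrArg Complex.re this

lemma diagDist_avgOutput (U : Matrix ι ι ℂ) (P : A → ℝ) (V : A → Matrix ι ι ℂ) (i : ι) :
    diagDist U (avgOutput P V) i = ∑ a, P a * diagDist U (V a) i := by
  simp [diagDist, avgOutput, Matrix.mul_sum, Matrix.sum_mul, Matrix.sum_apply]

lemma re_trace_tensorProd_mul_diagProjection [DecidableEq ι] {n : ℕ} (U : Matrix ι ι ℂ)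
    {M : Fin n → Matrix ι ι ℂ} (hM : ∀ k, IsState (M k)) (T : Finset (Fin n → ι)) :
    (tensorProd M * diagProjection (tensorProd fun _ => U) T).trace.re =
      ∑ J ∈ T, ∏ k, diagDist U (M k) (J k) := by
  rw [trace_mul_diagProjection, conjTranspose_tensorProd, tensorProd_mul, tensorProd_mul,
    Complex.re_sum]
  refine Finset.sum_congr rfl fun J _ => ?_
  simp only [tensorProd, Matrix.of_apply, ← ofReal_diagDist U (hM _)]
  rw [← Complex.ofReal_prod, Complex.ofReal_re]

lemma sum_apply_of_hasType [DecidableEq A] {n : ℕ} {P : A → ℝ} {x : Fin n → A}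
    (hx : HasType P x) (f : A → ℝ) : ∑ k, f (x k) = n * ∑ a, P a * f a := by
  rw [← Finset.sum_fiberwise Finset.univ x, Finset.mul_sum]
  refine Finset.sum_congr rfl fun a _ => ?_
  rw [Finset.sum_congr rfl fun k hk => by rw [(Finset.mem_filter.mp hk).2], Finset.sum_const,
    nsmul_eq_mul, hx a, mul_assoc]

lemma exists_eigenbasis [DecidableEq ι] {ρ : Matrix ι ι ℂ} (hρ : IsState ρ) :
    ∃ U : Matrix ι ι ℂ, Uᴴ * U = 1 ∧ U * Uᴴ = 1 ∧
      ρ = U * Matrix.diagonal (fun i => (diagDist U ρ i : ℂ)) * Uᴴ ∧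
      vnEntropy ρ = -∑ i, diagDist U ρ i * Real.logb 2 (diagDist U ρ i) := by
  have h := hρ.1.isHermitian
  set U : Matrix ι ι ℂ := ↑h.eigenvectorUnitary
  have h1 : Uᴴ * U = 1 := Unitary.coe_star_mul_self h.eigenvectorUnitary
  have h2 : U * Uᴴ = 1 := Unitary.coe_mul_star_self h.eigenvectorUnitary
  have hspec : ρ = U * Matrix.diagonal (fun i => (h.eigenvalues i : ℂ)) * Uᴴ := by
    have := h.spectral_theorem
    rwa [Unitary.conjStarAlgAut_apply] at this
  have hdiag : diagDist U ρ = h.eigenvalues := by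
    funext i
    have : Uᴴ * ρ * U = Matrix.diagonal (fun i => (h.eigenvalues i : ℂ)) := by
      conv_lhs => rw [hspec]
      calc _ = (Uᴴ * U) * Matrix.diagonal (fun i => (h.eigenvalues i : ℂ)) * (Uᴴ * U) := by
            simp only [Matrix.mul_assoc]
        _ = _ := by rw [h1, Matrix.one_mul, Matrix.mul_one]
    rw [diagDist, this]
    simp
  refine ⟨U, h1, h2, ?_, ?_⟩
  · rw [hdiag]
    exact hspec
  · rw [vnEntropy, dif_pos h, hdiag]

end States

end TypicalProjector

end

open TypicalProjector

/-- Existence of averaged-output typical projectors compatible with conditional outputs. -/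
theorem averaged_typical_projector :
    ∃ K : ℝ, 0 < K ∧
      ∀ (A : Type*) [Fintype A] [DecidableEq A] (ι : Type*) [Fintype ι] [DecidableEq ι]
        (V : A → Matrix ι ι ℂ), (∀ a, IsState (V a)) →
      ∀ P : A → ℝ, IsDist P →
      ∀ n : ℕ, 1 ≤ n → ∀ α : ℝ, 0 < α →
      ∃ E : Matrix (Fin n → ι) (Fin n → ι) ℂ,
        IsStarProjection E ∧
        Commute E (tensorPow (avgOutput P V) n) ∧
        1 - (Fintype.card ι : ℝ) / (4 * Fintype.card A * α ^ 2) ≤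
          (tensorPow (avgOutput P V) n * E).trace.re ∧
        E.trace.re ≤ (2 : ℝ) ^ ((n : ℝ) * vnEntropy (avgOutput P V) +
          K * Fintype.card ι * α * Real.sqrt (Fintype.card A * n)) ∧
        loewnerLE (E * tensorPow (avgOutput P V) n * E)
          ((((2 : ℝ) ^ (-(n : ℝ) * vnEntropy (avgOutput P V) +
            K * Fintype.card ι * α * Real.sqrt (Fintype.card A * n)) : ℝ) : ℂ) • E) ∧
        ∀ x : Fin n → A, HasType P x →
          1 - (Fintype.card A : ℝ) * Fintype.card ι / (4 * α ^ 2) ≤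
            (cqPow V x * E).trace.re := by
  refine ⟨6, by norm_num, ?_⟩
  intro A _ _ ι _ _ V hV P hP n hn α hα
  have hρ := isState_avgOutput hP hV
  obtain ⟨U, hU, hU', hspec, hS⟩ := exists_eigenbasis hρ
  set ρ := avgOutput P V with hρdef
  set p := diagDist U ρ with hp
  have hA : 1 ≤ (Fintype.card A : ℝ) := by
    have : Nonempty A := by
      by_contra hcon
      rw [not_nonempty_iff] at hcon
      simpa using hP.2
    exact_mod_cast Fintype.card_pos (α := A)
  have hd : 1 ≤ (Fintype.card ι : ℝ) := by
    have : Nonempty ι := by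
      by_contra hcon
      rw [not_nonempty_iff] at hcon
      simpa [Matrix.trace] using hρ.2
    exact_mod_cast Fintype.card_pos (α := ι)
  have hn' : 1 ≤ (n : ℝ) := by exact_mod_cast hn
  set a : ℝ := (Fintype.card A : ℝ)
  set d : ℝ := (Fintype.card ι : ℝ)
  set t : ℝ := 6 * d * α * Real.sqrt (a * n) with ht
  have ht0 : 0 < t := by positivity
  have ht2 : t ^ 2 = 36 * d ^ 2 * α ^ 2 * (a * n) := by
    rw [ht, mul_pow, Real.sq_sqrt (by positivity)]
    ring
  have hp0 : ∀ i, 0 ≤ p i := diagDist_nonneg U hρ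
  have hpsum : ∑ i, p i = 1 := sum_diagDist hU' hρ
  have hp1 : ∀ i, p i ≤ 1 := fun i =>
    hpsum ▸ Finset.single_le_sum (fun j _ => hp0 j) (Finset.mem_univ i)
  have hmass : 9 * n * d / t ^ 2 ≤ d / (4 * a * α ^ 2) := by
    rw [ht2, div_le_div_iff₀ (by positivity) (by positivity)]
    have : 0 ≤ 36 * n * d * a * α ^ 2 * (d ^ 2 - 1) := by
      have : 0 ≤ d ^ 2 - 1 := by nlinarith
      positivity
    nlinarith
  have hmass' : d / (4 * a * α ^ 2) ≤ a * d / (4 * α ^ 2) := by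
    rw [div_le_div_iff₀ (by positivity) (by positivity)]
    have : 0 ≤ 4 * d * α ^ 2 * (a ^ 2 - 1) := by
      have : 0 ≤ a ^ 2 - 1 := by nlinarith
      positivity
    nlinarith
  have hW : (tensorProd fun _ : Fin n => U)ᴴ * tensorProd (fun _ => U) = 1 := by
    rw [conjTranspose_tensorProd, tensorProd_mul, hU, tensorProd_one]
  have hpow : tensorPow ρ n = (tensorProd fun _ : Fin n => U) *
      Matrix.diagonal (fun J => ((∏ k, p (J k) : ℝ) : ℂ)) * (tensorProd fun _ => U)ᴴ := by
    simp_rw [Complex.ofReal_prod]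
    rw [tensorPow, ← tensorProd_diagonal (fun _ i => (p i : ℂ)), conjTranspose_tensorProd,
      tensorProd_mul, tensorProd_mul, ← hspec]
  refine ⟨diagProjection (tensorProd fun _ => U) (typicalSet p n t),
    isStarProjection_diagProjection hW _, ?_, ?_, ?_, ?_, ?_⟩
  · rw [hpow]
    exact commute_diagProjection hW _ _
  · rw [tensorPow, re_trace_tensorProd_mul_diagProjection U fun _ => hρ]
    refine (sub_le_sub_left hmass 1).trans ?_
    exact le_sum_typicalSet (fun _ => p) p (fun _ => hp0) (fun _ => hpsum) (by simp) hp0 hp1 ht0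
  · rw [trace_diagProjection hW, hS, Complex.natCast_re, mul_neg]
    exact card_typicalSet_le hp0 hpsum t
  · rw [hpow, hS, neg_mul_neg]
    exact loewnerLE_diagProjection hW _ _ _ fun J hJ => prod_le_of_mem_typicalSet hJ
  · intro x hx
    rw [cqPow, re_trace_tensorProd_mul_diagProjection U fun _ => hV _]
    refine (sub_le_sub_left (hmass.trans hmass') 1).trans ?_
    refine le_sum_typicalSet (fun k => diagDist U (V (x k))) p
      (fun k => diagDist_nonneg U (hV _)) (fun k => sum_diagDist hU' (hV _)) (fun i => ?_)
      hp0 hp1 ht0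
    rw [hp, hρdef, diagDist_avgOutput]
    exact sum_apply_of_hasType hx fun a => diagDist U (V a) i
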